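/- There exists an absolute constant c ≥ 1 such that for every dimension d ≥ 2, all convex bodies G, K ⊆ ℝ^d with 0 ∈ int(G) and G ⊆ int(K), every α with 0 < α ≤ 1, and every set U ⊆ K°, with G₊ := {x ∈ int(K) : inf_{g∈G} d_H^K(x,g) ≤ α} the Hilbert α-expansion of G in K, one has N_{(G₊)°}(U, α) ≤ c^{d} · N_{G°}(U, α), where N_A(U,α) denotes the Hilbert covering number of U with respect to the body A. -/

import Mathlib

open Set MeasureTheory Metric
open scoped Pointwise RealInnerProductSpace ENNReal

noncomputable section

abbrev Euc (d : ℕ) := EuclideanSpace ℝ (Fin d)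

/-- A convex body: a compact convex set with nonempty interior. -/
def IsConvexBody {d : ℕ} (K : Set (Euc d)) : Prop :=
  IsCompact K ∧ Convex ℝ K ∧ (interior K).Nonempty

/-- The polar of a set. -/
def polarSet {d : ℕ} (S : Set (Euc d)) : Set (Euc d) :=
  {y | ∀ x ∈ S, ⟪x, y⟫ ≤ 1}

/-- The Hilbert distance with respect to the body `K`. -/
def hilbertDist {d : ℕ} (K : Set (Euc d)) (x y : Euc d) : ℝ :=
  -(1 / 2) * Real.log ((1 - gauge ((fun k => k - x) '' K) (y - x)) *
    (1 - gauge ((fun k => k - y) '' K) (x - y)))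

/-- The Hilbert ball of radius `r` centered at `x`. -/
def hilbertBall {d : ℕ} (K : Set (Euc d)) (x : Euc d) (r : ℝ) : Set (Euc d) :=
  {y ∈ interior K | hilbertDist K x y ≤ r}

/-- The Hilbert covering number of `U` at scale `α` in the geometry induced by `K`. -/
def hilbertCov {d : ℕ} (K U : Set (Euc d)) (α : ℝ) : ℕ :=
  sInf {m : ℕ | ∃ x : Fin m → Euc d, (∀ i, x i ∈ interior K) ∧
    U ⊆ ⋃ i, hilbertBall K (x i) α}

/-- The translative covering number of `U` by translates of `α • D`. -/
def transCov {d : ℕ} (D U : Set (Euc d)) (α : ℝ) : ℕ :=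
  sInf {m : ℕ | ∃ x : Fin m → Euc d, U ⊆ ⋃ i, x i +ᵥ α • D}

/-- The Hilbert `α`-expansion of `G` in `K`. -/
def hilbertExpand {d : ℕ} (K G : Set (Euc d)) (α : ℝ) : Set (Euc d) :=
  {x ∈ interior K | sInf (hilbertDist K x '' G) ≤ α}

/-- The Lebesgue volume of the Euclidean unit ball in `ℝ^d`. -/
def ωd (d : ℕ) : ℝ := (volume (ball (0 : Euc d) 1)).toReal

/-- The Hilbert Finsler unit ball at `y` in the geometry induced by `K`. -/
def finslerBall {d : ℕ} (K : Set (Euc d)) (y : Euc d) : Set (Euc d) :=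
  {v | gauge ((fun k => k - y) '' K) v + gauge ((fun k => k - y) '' K) (-v) ≤ 2}

/-- The Hilbert Holmes–Thompson volume of `U` in the geometry induced by `K`. -/
def volH {d : ℕ} (K U : Set (Euc d)) : ℝ :=
  (1 / ωd d) * ∫ y in U, (volume (polarSet (finslerBall K y))).toReal

/-- The recentered Macbeath region `A(x) := (K ∩ (2x − K)) − x`. -/
def macbeathA {d : ℕ} (K : Set (Euc d)) (x : Euc d) : Set (Euc d) :=
  (fun k => k - x) '' (K ∩ ((fun k => (2 : ℝ) • x - k) '' K))

/-! Write `ℓ_x y = 1 - ⟪x, y⟫`. In any body, points at Hilbert distance at most `r` have values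
within a factor `exp (2 * r)` of each other under every affine function that is nonnegative on the
body; in a polar body `S°` it conversely suffices to compare the functions `ℓ_x`, `x ∈ S`. A point
`x` of the expansion `G₊` is at distance less than `2 * α` from some `g ∈ G`, so `ℓ_x` and `ℓ_g`
agree on `K°` up to a factor `exp (4 * α)`. Hence on the part of `K°` in an `α`-ball of `G°` every
`ℓ_x`, `x ∈ G₊`, varies at most by a factor `exp (12 * α)`. Such a part lies in a dilate of the
Macbeath region of `G₊°` at any one of its points, while a smaller dilate of the same region has
Hilbert radius at most `α`; comparing volumes, boundedly many (to the power `d`) of the small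
dilates suffice. -/

theorem exp_nat_mul_sub_one_le (n : ℕ) (t : ℝ) :
    Real.exp (n * t) - 1 ≤ n * Real.exp (n * t) * (1 - Real.exp (-t)) := by
  have hbernoulli : 1 + n * (Real.exp (-t) - 1) ≤ Real.exp (-(n * t)) := by
    rw [← mul_neg, Real.exp_nat_mul]
    exact one_add_mul_sub_le_pow (by linarith [Real.exp_pos (-t)]) n
  have h := mul_le_mul_of_nonneg_left hbernoulli (Real.exp_pos (n * t)).le
  rw [← Real.exp_add, add_neg_cancel, Real.exp_zero] at h
  linarith

section Funk

variable {E : Type*} [AddCommGroup E] [Module ℝ E]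

theorem apply_le_mul_gauge {V : Set E} (hV : Absorbent ℝ V) (f : E →ₗ[ℝ] ℝ) {c : ℝ} (hc : 0 ≤ c)
    (hf : ∀ v ∈ V, f v ≤ c) (u : E) : f u ≤ c * gauge V u := by
  rw [gauge_def, ← smul_eq_mul, ← Real.sInf_smul_of_nonneg hc]
  refine le_csInf (hV.gauge_set_nonempty.smul_set) ?_
  rintro _ ⟨r, ⟨hr, v, hv, rfl⟩, rfl⟩
  simpa only [map_smul, smul_eq_mul, mul_comm c] using mul_le_mul_of_nonneg_left (hf v hv) hr.le

/-- The exponential of minus the Funk distance from `x` to `y` in `K`, so that the Hilbert distance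
is minus half the logarithm of `funkRatio K x y * funkRatio K y x`. -/
def funkRatio (K : Set E) (x y : E) : ℝ :=
  1 - gauge ((fun k => k - x) '' K) (y - x)

theorem funkRatio_le_one (K : Set E) (x y : E) : funkRatio K x y ≤ 1 :=
  sub_le_self 1 (gauge_nonneg _)

variable [TopologicalSpace E] [IsTopologicalAddGroup E] [ContinuousSMul ℝ E]
  {K L : Set E} {x y : E}

theorem absorbent_image_sub_right (hx : x ∈ interior K) :
    Absorbent ℝ ((fun k => k - x) '' K) := by
  refine absorbent_nhds_zero ?_
  simpa using (Homeomorph.subRight x).isOpenMap.image_mem_nhds (mem_interior_iff_mem_nhds.1 hx)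

theorem funkRatio_pos (hy : y ∈ interior K) : 0 < funkRatio K x y := by
  refine sub_pos.2 (interior_subset_gauge_lt_one _ ?_)
  exact ((Homeomorph.subRight x).image_interior K).subset ⟨y, hy, rfl⟩

theorem funkRatio_mono (hKL : K ⊆ L) (hx : x ∈ interior K) :
    funkRatio K x y ≤ funkRatio L x y :=
  sub_le_sub_left (gauge_mono (absorbent_image_sub_right hx) (image_mono hKL) _) 1

theorem funkRatio_mul_le (hx : x ∈ interior K) (f : E →ₗ[ℝ] ℝ) {c : ℝ} (hf : ∀ k ∈ K, f k ≤ c) :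
    funkRatio K x y * (c - f x) ≤ c - f y := by
  have hfV : ∀ v ∈ (fun k => k - x) '' K, f v ≤ c - f x := by
    rintro _ ⟨k, hk, rfl⟩
    rw [map_sub]
    exact sub_le_sub_right (hf k hk) _
  have h := apply_le_mul_gauge (absorbent_image_sub_right hx) f
    (sub_nonneg.2 (hf x (interior_subset hx))) hfV (y - x)
  rw [map_sub] at h
  rw [funkRatio]
  linarith

end Funk

section HilbertDist

variable {d : ℕ} {K L : Set (Euc d)} {x y : Euc d} {r : ℝ}

theorem hilbertDist_eq_log_funkRatio (K : Set (Euc d)) (x y : Euc d) :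
    hilbertDist K x y = -(1 / 2) * Real.log (funkRatio K x y * funkRatio K y x) :=
  rfl

theorem hilbertDist_comm (K : Set (Euc d)) (x y : Euc d) :
    hilbertDist K x y = hilbertDist K y x := by
  rw [hilbertDist_eq_log_funkRatio, mul_comm (funkRatio K x y), ← hilbertDist_eq_log_funkRatio]

theorem hilbertDist_self (K : Set (Euc d)) (x : Euc d) : hilbertDist K x x = 0 := by
  simp [hilbertDist]

theorem hilbertDist_nonneg (hx : x ∈ interior K) (hy : y ∈ interior K) :
    0 ≤ hilbertDist K x y := by
  have hlog : Real.log (funkRatio K x y * funkRatio K y x) ≤ 0 :=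
    Real.log_nonpos (mul_pos (funkRatio_pos hy) (funkRatio_pos hx)).le
      (mul_le_one₀ (funkRatio_le_one K x y) (funkRatio_pos hx).le (funkRatio_le_one K y x))
  rw [hilbertDist_eq_log_funkRatio]
  linarith

theorem hilbertDist_anti (hKL : K ⊆ L) (hx : x ∈ interior K) (hy : y ∈ interior K) :
    hilbertDist L x y ≤ hilbertDist K x y := by
  have hlog : Real.log (funkRatio K x y * funkRatio K y x) ≤
      Real.log (funkRatio L x y * funkRatio L y x) :=
    Real.log_le_log (mul_pos (funkRatio_pos hy) (funkRatio_pos hx))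
      (mul_le_mul (funkRatio_mono hKL hx) (funkRatio_mono hKL hy) (funkRatio_pos hx).le
        (funkRatio_pos (interior_mono hKL hy)).le)
  rw [hilbertDist_eq_log_funkRatio, hilbertDist_eq_log_funkRatio]
  linarith

theorem hilbertBall_mono (hKL : K ⊆ L) (hx : x ∈ interior K) :
    hilbertBall K x r ⊆ hilbertBall L x r :=
  fun _ ⟨hy, hxy⟩ => ⟨interior_mono hKL hy, (hilbertDist_anti hKL hx hy).trans hxy⟩

theorem exp_le_funkRatio_of_hilbertDist_le (hx : x ∈ interior K) (hy : y ∈ interior K)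
    (hxy : hilbertDist K x y ≤ r) : Real.exp (-(2 * r)) ≤ funkRatio K x y := by
  have hpos : 0 < funkRatio K x y * funkRatio K y x :=
    mul_pos (funkRatio_pos hy) (funkRatio_pos hx)
  calc
    Real.exp (-(2 * r)) ≤ funkRatio K x y * funkRatio K y x := by
      rw [hilbertDist_eq_log_funkRatio] at hxy
      rw [← Real.le_log_iff_exp_le hpos]
      linarith
    _ ≤ funkRatio K x y := mul_le_of_le_one_right (funkRatio_pos hy).le (funkRatio_le_one K y x)

theorem hilbertDist_le_of_exp_le_funkRatio (hxy : Real.exp (-r) ≤ funkRatio K x y)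
    (hyx : Real.exp (-r) ≤ funkRatio K y x) : hilbertDist K x y ≤ r := by
  have hexp : Real.exp (-r + -r) ≤ funkRatio K x y * funkRatio K y x := by
    rw [Real.exp_add]
    exact mul_le_mul hxy hyx (Real.exp_pos _).le ((Real.exp_pos _).le.trans hxy)
  have hlog := (Real.le_log_iff_exp_le ((Real.exp_pos _).trans_le hexp)).2 hexp
  rw [hilbertDist_eq_log_funkRatio]
  linarith

theorem one_sub_inner_le_of_hilbertDist_le {w : Euc d} (hx : x ∈ interior K)
    (hy : y ∈ interior K) (hxy : hilbertDist K x y ≤ r) (hw : w ∈ polarSet K) :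
    1 - ⟪x, w⟫ ≤ Real.exp (2 * r) * (1 - ⟪y, w⟫) := by
  have hfunk : funkRatio K x y * (1 - ⟪x, w⟫) ≤ 1 - ⟪y, w⟫ :=
    funkRatio_mul_le hx ((innerₗ (Euc d)).flip w) hw
  have hx0 : 0 ≤ 1 - ⟪x, w⟫ := sub_nonneg.2 (hw x (interior_subset hx))
  have h := (mul_le_mul_of_nonneg_right (exp_le_funkRatio_of_hilbertDist_le hx hy hxy) hx0).trans
    hfunk
  rwa [Real.exp_neg, inv_mul_le_iff₀ (Real.exp_pos _)] at h

end HilbertDist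

section Polar

variable {d : ℕ} {S T : Set (Euc d)} {x y z : Euc d}

theorem polarSet_anti (hST : S ⊆ T) : polarSet T ⊆ polarSet S :=
  fun _ hy x hx => hy x (hST hx)

theorem subset_polarSet_polarSet (S : Set (Euc d)) : S ⊆ polarSet (polarSet S) :=
  fun x hx y hy => (real_inner_comm x y).trans_le (hy x hx)

theorem convex_polarSet (S : Set (Euc d)) : Convex ℝ (polarSet S) := by
  have h : polarSet S = ⋂ x ∈ S, {y | innerₗ (Euc d) x y ≤ 1} := by
    ext y
    simp [polarSet]
  rw [h]
  exact convex_iInter₂ fun x _ => convex_halfSpace_le (innerₗ (Euc d) x).isLinear 1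

theorem exists_pos_le_one_sub_inner (hy : y ∈ interior (polarSet S)) :
    ∃ δ > 0, ∀ x ∈ S, δ ≤ 1 - ⟪x, y⟫ := by
  -- A slight outward dilation `(1 + t) • y` still lies in the polar.
  have hdil : Filter.Tendsto (fun t : ℝ => (1 + t) • y) (nhdsWithin 0 (Ioi 0)) (nhds y) := by
    have hcont : Continuous fun t : ℝ => (1 + t) • y := by fun_prop
    simpa using (hcont.tendsto 0).mono_left nhdsWithin_le_nhds
  obtain ⟨t, hty, ht : 0 < t⟩ :=
    ((hdil.eventually (mem_interior_iff_mem_nhds.1 hy)).and self_mem_nhdsWithin).exists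
  refine ⟨t / (1 + t), by positivity, fun x hx => ?_⟩
  have hxy : ⟪x, (1 + t) • y⟫ ≤ 1 := hty x hx
  rw [real_inner_smul_right] at hxy
  rw [div_le_iff₀ (by positivity)]
  linarith

theorem mem_interior_polarSet_iff (hS : Bornology.IsBounded S) :
    y ∈ interior (polarSet S) ↔ ∃ δ > 0, ∀ x ∈ S, δ ≤ 1 - ⟪x, y⟫ := by
  refine ⟨exists_pos_le_one_sub_inner, fun ⟨δ, hδ, hy⟩ => ?_⟩
  obtain ⟨R, hR, hSR⟩ := hS.exists_pos_norm_le
  rw [mem_interior_iff_mem_nhds, Metric.mem_nhds_iff]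
  refine ⟨δ / R, div_pos hδ hR, fun z hz x hx => ?_⟩
  have hxz : ⟪x, z - y⟫ ≤ δ := calc
    ⟪x, z - y⟫ ≤ ‖x‖ * ‖z - y‖ := real_inner_le_norm _ _
    _ ≤ R * (δ / R) :=
      mul_le_mul (hSR x hx) (mem_ball_iff_norm.1 hz).le (norm_nonneg _) hR.le
    _ = δ := mul_div_cancel₀ δ hR.ne'
  rw [inner_sub_right] at hxz
  linarith [hy x hx]

theorem le_funkRatio_polarSet {t : ℝ} (ht : t < 1)
    (h : ∀ x ∈ S, t * (1 - ⟪x, y⟫) ≤ 1 - ⟪x, z⟫) : t ≤ funkRatio (polarSet S) y z := by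
  have ht' : 0 < 1 - t := sub_pos.2 ht
  suffices hmem : z - y ∈ (1 - t) • ((fun k => k - y) '' polarSet S) from
    le_sub_comm.1 (gauge_le_of_mem ht'.le hmem)
  rw [mem_smul_set_iff_inv_smul_mem₀ ht'.ne']
  refine ⟨y + (1 - t)⁻¹ • (z - y), fun x hx => ?_, add_sub_cancel_left _ _⟩
  have hxz : (1 - t)⁻¹ * (⟪x, z⟫ - ⟪x, y⟫) ≤ 1 - ⟪x, y⟫ := by
    rw [inv_mul_le_iff₀ ht']
    linarith [h x hx]
  rw [inner_add_right, real_inner_smul_right, inner_sub_right]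
  linarith

theorem hilbertDist_polarSet_le_of_abs_inner_sub_le {r : ℝ} (hr : 0 < r)
    (hy : ∀ x ∈ S, |⟪x, z - y⟫| ≤ (1 - Real.exp (-r)) * (1 - ⟪x, y⟫))
    (hz : ∀ x ∈ S, |⟪x, z - y⟫| ≤ (1 - Real.exp (-r)) * (1 - ⟪x, z⟫)) :
    hilbertDist (polarSet S) y z ≤ r := by
  have hexp : Real.exp (-r) < 1 := Real.exp_lt_one_iff.2 (neg_lt_zero.2 hr)
  simp only [inner_sub_right, abs_le] at hy hz
  exact hilbertDist_le_of_exp_le_funkRatio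
    (le_funkRatio_polarSet hexp fun x hx => by linarith [(hy x hx).2])
    (le_funkRatio_polarSet hexp fun x hx => by linarith [(hz x hx).1])

end Polar

section Macbeath

variable {d : ℕ} {K S : Set (Euc d)} {x y z v : Euc d}

theorem macbeathA_eq_inter_preimage (K : Set (Euc d)) (x : Euc d) :
    macbeathA K x = (fun v => x + v) ⁻¹' K ∩ (fun v => x - v) ⁻¹' K := by
  ext v
  constructor
  · rintro ⟨_, ⟨hk, l, hl, rfl⟩, rfl⟩
    have hl' : x - ((2 : ℝ) • x - l - x) = l := by module
    exact ⟨by simpa using hk, mem_preimage.2 (hl'.symm ▸ hl)⟩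
  · rintro ⟨hadd, hsub⟩
    exact ⟨x + v, ⟨hadd, x - v, hsub, by module⟩, add_sub_cancel_left x v⟩

theorem neg_mem_macbeathA (hv : v ∈ macbeathA K x) : -v ∈ macbeathA K x := by
  rw [macbeathA_eq_inter_preimage] at hv ⊢
  simpa [sub_eq_add_neg] using hv.symm

theorem convex_macbeathA (hK : Convex ℝ K) (x : Euc d) : Convex ℝ (macbeathA K x) := by
  rw [macbeathA_eq_inter_preimage]
  exact (hK.translate_preimage_right x).inter
    (hK.affine_preimage
      (AffineMap.const ℝ (Euc d) x - (LinearMap.id : Euc d →ₗ[ℝ] Euc d).toAffineMap))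

theorem zero_mem_interior_macbeathA (hx : x ∈ interior K) :
    (0 : Euc d) ∈ interior (macbeathA K x) := by
  rw [mem_interior_iff_mem_nhds] at hx ⊢
  rw [macbeathA_eq_inter_preimage]
  have hadd : Continuous fun v : Euc d => x + v := by fun_prop
  have hsub : Continuous fun v : Euc d => x - v := by fun_prop
  exact Filter.inter_mem (hadd.continuousAt.preimage_mem_nhds (by simpa using hx))
    (hsub.continuousAt.preimage_mem_nhds (by simpa using hx))

theorem mem_macbeathA_polarSet :
    v ∈ macbeathA (polarSet S) y ↔ ∀ x ∈ S, |⟪x, v⟫| ≤ 1 - ⟪x, y⟫ := by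
  rw [macbeathA_eq_inter_preimage, mem_inter_iff, mem_preimage, mem_preimage]
  simp only [polarSet, mem_ofPred_eq, inner_add_right, inner_sub_right, ← forall₂_and]
  refine forall₂_congr fun x _ => ?_
  rw [abs_le]
  constructor <;> rintro ⟨h₁, h₂⟩ <;> constructor <;> linarith

theorem mem_smul_macbeathA_polarSet {a : ℝ} (ha : 0 < a) :
    v ∈ a • macbeathA (polarSet S) y ↔ ∀ x ∈ S, |⟪x, v⟫| ≤ a * (1 - ⟪x, y⟫) := by
  rw [mem_smul_set_iff_inv_smul_mem₀ ha.ne', mem_macbeathA_polarSet]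
  refine forall₂_congr fun x _ => ?_
  rw [real_inner_smul_right, abs_mul, abs_of_pos (inv_pos.2 ha), inv_mul_le_iff₀ ha]

theorem sub_mem_smul_macbeathA_polarSet {L : ℝ} (hL : 1 < L)
    (hyz : ∀ x ∈ S, 1 - ⟪x, z⟫ ≤ L * (1 - ⟪x, y⟫))
    (hzy : ∀ x ∈ S, 1 - ⟪x, y⟫ ≤ L * (1 - ⟪x, z⟫)) :
    z - y ∈ (L - 1) • macbeathA (polarSet S) y := by
  rw [mem_smul_macbeathA_polarSet (sub_pos.2 hL)]
  intro x hx
  have hyzx := hyz x hx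
  have hzyx := hzy x hx
  rw [inner_sub_right, abs_le]
  constructor <;> nlinarith

theorem isBounded_macbeathA_polarSet (hS : (interior S).Nonempty) (y : Euc d) :
    Bornology.IsBounded (macbeathA (polarSet S) y) := by
  obtain ⟨x₀, hx₀⟩ := hS
  obtain ⟨ρ, hρ, hball⟩ :=
    Metric.nhds_basis_closedBall.mem_iff.1 (mem_interior_iff_mem_nhds.1 hx₀)
  refine (Metric.isBounded_closedBall (x := (0 : Euc d))
    (r := (2 - 2 * ⟪x₀, y⟫ + ρ * ‖y‖) / ρ)).subset fun v hv => ?_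
  rw [mem_macbeathA_polarSet] at hv
  rw [mem_closedBall_zero_iff, le_div_iff₀ hρ]
  -- The inner product with `v` takes values differing by `ρ * ‖v‖` at `x₀` and `x₀ + ρ • u`.
  set u : Euc d := ‖v‖⁻¹ • v
  have hu : ‖u‖ ≤ 1 := by
    rw [norm_smul, norm_inv, norm_norm]
    exact inv_mul_le_one
  have huv : ⟪u, v⟫ = ‖v‖ := by
    rw [real_inner_smul_left, real_inner_self_eq_norm_mul_norm, ← mul_assoc, inv_mul_mul_self]
  have hmem : x₀ + ρ • u ∈ S := hball <| by
    rw [mem_closedBall_iff_norm, add_sub_cancel_left, norm_smul, Real.norm_of_nonneg hρ.le]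
    exact mul_le_of_le_one_right hρ.le hu
  have huy : -(ρ * ‖y‖) ≤ ρ * ⟪u, y⟫ := by
    rw [← mul_neg]
    have h := (abs_real_inner_le_norm u y).trans (mul_le_of_le_one_left (norm_nonneg y) hu)
    exact mul_le_mul_of_nonneg_left (abs_le.1 h).1 hρ.le
  have hx₀v := (abs_le.1 (hv x₀ (interior_subset hx₀))).1
  have hxv := (abs_le.1 (hv _ hmem)).2
  simp only [inner_add_left, real_inner_smul_left, huv] at hxv
  linarith

end Macbeath

section Packing

theorem exists_finset_isCover {X : Type*} {R : SetRel X X} [R.IsRefl] [R.IsSymm] {s : Set X}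
    {n : ℕ} (hn : ∀ P : Finset X, ↑P ⊆ s → R.IsSeparated ↑P → P.card ≤ n) :
    ∃ P : Finset X, ↑P ⊆ s ∧ P.card ≤ n ∧ R.IsCover s ↑P := by
  classical
  obtain ⟨P, ⟨hPs, hP⟩, hmax⟩ := (measure fun P : Finset X => n - P.card).wf.has_min
    {P : Finset X | ↑P ⊆ s ∧ R.IsSeparated (↑P : Set X)}
    ⟨∅, by simp⟩
  refine ⟨P, hPs, hn P hPs hP, SetRel.IsCover.of_maximal_isSeparated ⟨⟨hPs, hP⟩, ?_⟩⟩
  rintro N ⟨hNs, hN⟩ hPN x hx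
  by_contra hxP
  have hsub : (↑(insert x P) : Set X) ⊆ N := by
    rw [Finset.coe_insert]
    exact insert_subset hx hPN
  have hle : (insert x P).card ≤ n := hn _ (hsub.trans hNs) (hN.mono_right hsub)
  have hnot : ¬ n - (insert x P).card < n - P.card :=
    hmax _ ⟨hsub.trans hNs, hN.mono_right hsub⟩
  rw [Finset.card_insert_of_notMem hxP] at hle hnot
  omega

theorem disjoint_vadd_half_smul {E : Type*} [AddCommGroup E] [Module ℝ E] {M : Set E} {a : ℝ}
    {z w : E} (hconv : Convex ℝ M) (hsymm : ∀ v ∈ M, -v ∈ M)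
    (hzw : w - z ∉ a • M) : Disjoint (z +ᵥ (a / 2) • M) (w +ᵥ (a / 2) • M) := by
  rw [Set.disjoint_left]
  rintro _ ⟨_, ⟨m, hm, rfl⟩, rfl⟩ ⟨_, ⟨m', hm', rfl⟩, heq⟩
  refine hzw ⟨(1 / 2 : ℝ) • m + (1 / 2 : ℝ) • -m',
    hconv hm (hsymm _ hm') (by norm_num) (by norm_num) (by norm_num), ?_⟩
  have heq : w + (a / 2) • m' = z + (a / 2) • m := heq
  calc
    a • ((1 / 2 : ℝ) • m + (1 / 2 : ℝ) • -m') = z + (a / 2) • m - (a / 2) • m' - z := by module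
    _ = w - z := by rw [← heq, add_sub_cancel_right]

variable {E : Type*} [NormedAddCommGroup E] [NormedSpace ℝ E] [FiniteDimensional ℝ E]
  {M : Set E} {a b : ℝ} {y : E}

theorem card_le_of_sub_notMem_smul (hconv : Convex ℝ M) (hsymm : ∀ v ∈ M, -v ∈ M)
    (hbdd : Bornology.IsBounded M) (hint : (interior M).Nonempty) (ha : 0 < a) (hb : 0 ≤ b)
    {P : Finset E} (hP : ∀ z ∈ P, z - y ∈ b • M)
    (hsep : (↑P : Set E).Pairwise fun z w => w - z ∉ a • M) :
    (P.card : ℝ) ≤ (1 + 2 * b / a) ^ Module.finrank ℝ E := by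
  borelize E
  let μ : Measure E := Measure.addHaar
  have hpos : 0 < μ.real M :=
    ENNReal.toReal_pos (Measure.measure_pos_of_nonempty_interior μ hint).ne' hbdd.measure_lt_top.ne
  have hsub : (⋃ z ∈ P, z +ᵥ (a / 2) • M) ⊆ y +ᵥ (b + a / 2) • M := by
    refine iUnion₂_subset fun z hz => ?_
    rintro _ ⟨u, hu, rfl⟩
    rw [hconv.add_smul hb (by positivity)]
    refine ⟨(z - y) + u, Set.add_mem_add (hP z hz) hu, ?_⟩
    simp only [vadd_eq_add]
    abel
  have hvol : (P.card : ℝ) * ((a / 2) ^ Module.finrank ℝ E * μ.real M) ≤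
      (b + a / 2) ^ Module.finrank ℝ E * μ.real M := calc
    _ = ∑ z ∈ P, μ.real (z +ᵥ (a / 2) • M) := by
      simp only [measureReal_def, measure_vadd, Measure.addHaar_smul, ENNReal.toReal_mul,
        Finset.sum_const, nsmul_eq_mul]
      rw [ENNReal.toReal_ofReal (abs_nonneg _), abs_of_pos (by positivity)]
    _ = μ.real (⋃ z ∈ P, z +ᵥ (a / 2) • M) := by
      refine (measureReal_biUnion_finset₀ (fun z hz w hw hne => ?_) (fun z _ => ?_)
        fun z _ => ?_).symm
      · exact (disjoint_vadd_half_smul hconv hsymm (hsep hz hw hne)).aedisjoint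
      · exact ((hconv.smul (a / 2)).vadd z).nullMeasurableSet μ
      · exact ((hbdd.smul₀ _).vadd z).measure_lt_top.ne
    _ ≤ μ.real (y +ᵥ (b + a / 2) • M) :=
      measureReal_mono hsub ((hbdd.smul₀ _).vadd y).measure_lt_top.ne
    _ = _ := by
      rw [measureReal_def, measure_vadd, Measure.addHaar_smul, ENNReal.toReal_mul,
        ENNReal.toReal_ofReal (abs_nonneg _), abs_of_pos (by positivity), measureReal_def]
  have hratio : 1 + 2 * b / a = (b + a / 2) / (a / 2) := by
    field_simp
    ring
  rw [hratio, div_pow, le_div_iff₀ (by positivity)]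
  exact le_of_mul_le_mul_right (by rwa [mul_assoc]) hpos

theorem exists_finset_sub_mem_smul (hconv : Convex ℝ M) (hsymm : ∀ v ∈ M, -v ∈ M)
    (hbdd : Bornology.IsBounded M) (hint : (interior M).Nonempty) (ha : 0 < a) (hb : 0 ≤ b)
    {T : Set E} (hT : ∀ z ∈ T, z - y ∈ b • M) :
    ∃ P : Finset E, ↑P ⊆ T ∧ (P.card : ℝ) ≤ (1 + 2 * b / a) ^ Module.finrank ℝ E ∧
      ∀ z ∈ T, ∃ p ∈ P, z - p ∈ a • M := by
  let R : SetRel E E := {p | p.1 - p.2 ∈ a • M}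
  have hsymm' : ∀ v ∈ a • M, -v ∈ a • M := by
    rintro _ ⟨m, hm, rfl⟩
    exact ⟨-m, hsymm m hm, smul_neg a m⟩
  have hzero : (0 : E) ∈ M := by
    obtain ⟨m, hm⟩ := hint.mono interior_subset
    simpa using hconv.midpoint_mem hm (hsymm m hm)
  have : R.IsRefl := ⟨fun z => by simpa [R] using ⟨0, hzero, smul_zero a⟩⟩
  have : R.IsSymm := ⟨fun z w h => show w - z ∈ a • M from neg_sub z w ▸ hsymm' _ h⟩
  obtain ⟨P, hPT, hcard, hcover⟩ := exists_finset_isCover (R := R) (s := T)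
    (n := ⌊(1 + 2 * b / a) ^ Module.finrank ℝ E⌋₊) fun P hPT hsep =>
      Nat.le_floor <| card_le_of_sub_notMem_smul hconv hsymm hbdd hint ha hb
        (fun z hz => hT z (hPT hz)) fun z hz w hw hne => hsep hw hz hne.symm
  exact ⟨P, hPT, (Nat.cast_le.2 hcard).trans (Nat.floor_le (by positivity)), hcover⟩

end Packing

section Cover

variable {d : ℕ} {A B U : Set (Euc d)} {α : ℝ}

/-- `P` is the set of centers of a cover of `U` by Hilbert `α`-balls in `A`. Finite sets of centers
replace the families indexed by `Fin m` in `hilbertCov`. -/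
def IsHilbertCover (A U : Set (Euc d)) (α : ℝ) (P : Finset (Euc d)) : Prop :=
  ↑P ⊆ interior A ∧ U ⊆ ⋃ p ∈ P, hilbertBall A p α

theorem IsHilbertCover.mono {P : Finset (Euc d)} (hAB : A ⊆ B) (hP : IsHilbertCover A U α P) :
    IsHilbertCover B U α P :=
  ⟨hP.1.trans (interior_mono hAB),
    hP.2.trans (iUnion₂_mono fun _ hp => hilbertBall_mono hAB (hP.1 hp))⟩

theorem IsHilbertCover.biUnion [DecidableEq (Euc d)] {Q : Finset (Euc d)} {V : Euc d → Set (Euc d)}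
    {P : Euc d → Finset (Euc d)} (hQ : U ⊆ ⋃ q ∈ Q, V q)
    (hP : ∀ q ∈ Q, IsHilbertCover A (U ∩ V q) α (P q)) : IsHilbertCover A U α (Q.biUnion P) := by
  constructor
  · rw [Finset.coe_biUnion]
    exact iUnion₂_subset fun q hq => (hP q hq).1
  · intro u hu
    obtain ⟨q, hq, huq⟩ := mem_iUnion₂.1 (hQ hu)
    obtain ⟨p, hp, hup⟩ := mem_iUnion₂.1 ((hP q hq).2 ⟨hu, huq⟩)
    exact mem_iUnion₂.2 ⟨p, Finset.mem_biUnion.2 ⟨q, hq, hp⟩, hup⟩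

theorem IsHilbertCover.exists_fin {P : Finset (Euc d)} (hP : IsHilbertCover A U α P) :
    ∃ x : Fin P.card → Euc d, (∀ i, x i ∈ interior A) ∧ U ⊆ ⋃ i, hilbertBall A (x i) α := by
  refine ⟨fun i => P.equivFin.symm i, fun i => hP.1 (P.equivFin.symm i).2,
    hP.2.trans (iUnion₂_subset fun p hp => ?_)⟩
  simpa using subset_iUnion (fun i => hilbertBall A (P.equivFin.symm i) α) (P.equivFin ⟨p, hp⟩)

theorem exists_isHilbertCover_of_fin {m : ℕ} {x : Fin m → Euc d} (hx : ∀ i, x i ∈ interior A)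
    (hU : U ⊆ ⋃ i, hilbertBall A (x i) α) :
    ∃ P : Finset (Euc d), IsHilbertCover A U α P ∧ P.card ≤ m := by
  classical
  refine ⟨Finset.univ.image x, ⟨?_, ?_⟩, Finset.card_image_le.trans_eq (Finset.card_fin m)⟩
  · simpa [range_subset_iff] using hx
  · simpa using hU

theorem IsHilbertCover.hilbertCov_le_card {P : Finset (Euc d)} (hP : IsHilbertCover A U α P) :
    hilbertCov A U α ≤ P.card :=
  Nat.sInf_le hP.exists_fin

theorem IsHilbertCover.exists_card_eq_hilbertCov {P : Finset (Euc d)}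
    (hP : IsHilbertCover A U α P) :
    ∃ Q : Finset (Euc d), IsHilbertCover A U α Q ∧ Q.card = hilbertCov A U α := by
  have hne : {m : ℕ | ∃ x : Fin m → Euc d, (∀ i, x i ∈ interior A) ∧
      U ⊆ ⋃ i, hilbertBall A (x i) α}.Nonempty := ⟨P.card, hP.exists_fin⟩
  obtain ⟨x, hx, hU⟩ := Nat.sInf_mem hne
  obtain ⟨Q, hQ, hcard⟩ := exists_isHilbertCover_of_fin hx hU
  exact ⟨Q, hQ, le_antisymm hcard hQ.hilbertCov_le_card⟩

theorem hilbertCov_eq_zero (h : ∀ P : Finset (Euc d), ¬ IsHilbertCover A U α P) :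
    hilbertCov A U α = 0 := by
  refine Nat.sInf_eq_zero.2 (Or.inr (eq_empty_iff_forall_notMem.2 ?_))
  rintro m ⟨x, hx, hU⟩
  obtain ⟨P, hP, -⟩ := exists_isHilbertCover_of_fin hx hU
  exact h P hP

theorem hilbertCov_le_mul_hilbertCov (hAB : A ⊆ B) {N : ℝ}
    (hloc : ∀ x ∈ interior B, ∃ P : Finset (Euc d),
      IsHilbertCover A (U ∩ hilbertBall B x α) α P ∧ (P.card : ℝ) ≤ N) :
    (hilbertCov A U α : ℝ) ≤ N * hilbertCov B U α := by
  classical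
  by_cases hB : ∃ P : Finset (Euc d), IsHilbertCover B U α P
  · obtain ⟨P₀, hP₀⟩ := hB
    obtain ⟨Q, hQ, hQcard⟩ := hP₀.exists_card_eq_hilbertCov
    choose! P hP hPcard using hloc
    calc
      (hilbertCov A U α : ℝ) ≤ (Q.biUnion P).card := Nat.cast_le.2
        (IsHilbertCover.biUnion hQ.2 fun q hq => hP q (hQ.1 hq)).hilbertCov_le_card
      _ ≤ ∑ q ∈ Q, ((P q).card : ℝ) := mod_cast Finset.card_biUnion_le
      _ ≤ ∑ _q ∈ Q, N := Finset.sum_le_sum fun q hq => hPcard q (hQ.1 hq)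
      _ = N * hilbertCov B U α := by rw [Finset.sum_const, nsmul_eq_mul, hQcard, mul_comm]
  · -- Neither side has a finite cover, so both covering numbers are `sInf ∅ = 0`.
    push Not at hB
    rw [hilbertCov_eq_zero hB, hilbertCov_eq_zero fun P hP => hB P (hP.mono hAB)]
    simp

theorem exists_isHilbertCover_polarSet {S T : Set (Euc d)} {L : ℝ}
    (hS : (interior S).Nonempty) (hα : 0 < α) (hL : 1 < L) (hT : T ⊆ interior (polarSet S))
    (hcomp : ∀ y ∈ T, ∀ z ∈ T, ∀ x ∈ S, 1 - ⟪x, z⟫ ≤ L * (1 - ⟪x, y⟫)) :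
    ∃ P : Finset (Euc d), IsHilbertCover (polarSet S) T α P ∧
      (P.card : ℝ) ≤ (1 + 2 * (L - 1) / ((1 - Real.exp (-α)) / L)) ^ d := by
  have hL0 : 0 < L := one_pos.trans hL
  have hL1 : 0 < L - 1 := sub_pos.2 hL
  have hε : 0 < 1 - Real.exp (-α) := sub_pos.2 (Real.exp_lt_one_iff.2 (neg_lt_zero.2 hα))
  rcases T.eq_empty_or_nonempty with rfl | ⟨y, hy⟩
  · refine ⟨∅, ⟨by simp, empty_subset _⟩, ?_⟩
    rw [Finset.card_empty, Nat.cast_zero]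
    positivity
  obtain ⟨P, hPT, hcard, hcover⟩ := exists_finset_sub_mem_smul
    (convex_macbeathA (convex_polarSet S) y) (fun _ => neg_mem_macbeathA)
    (isBounded_macbeathA_polarSet hS y) ⟨0, zero_mem_interior_macbeathA (hT hy)⟩
    (div_pos hε hL0) hL1.le
    fun z hz => sub_mem_smul_macbeathA_polarSet hL (hcomp y hy z hz) (hcomp z hz y hy)
  rw [finrank_euclideanSpace_fin] at hcard
  refine ⟨P, ⟨hPT.trans hT, fun z hz => ?_⟩, hcard⟩
  obtain ⟨p, hp, hpz⟩ := hcover z hz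
  rw [mem_smul_macbeathA_polarSet (div_pos hε hL0)] at hpz
  have hclose : ∀ w ∈ T, ∀ x ∈ S, |⟪x, z - p⟫| ≤ (1 - Real.exp (-α)) * (1 - ⟪x, w⟫) := by
    intro w hw x hx
    calc
      |⟪x, z - p⟫| ≤ (1 - Real.exp (-α)) / L * (1 - ⟪x, y⟫) := hpz x hx
      _ ≤ (1 - Real.exp (-α)) / L * (L * (1 - ⟪x, w⟫)) := by
        gcongr
        exact hcomp w hw y hy x hx
      _ = (1 - Real.exp (-α)) * (1 - ⟪x, w⟫) := by rw [← mul_assoc, div_mul_cancel₀ _ hL0.ne']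
  exact mem_iUnion₂.2 ⟨p, hp, hT hz,
    hilbertDist_polarSet_le_of_abs_inner_sub_le hα (hclose p (hPT hp)) (hclose z hz)⟩

end Cover

section Expansion

variable {d : ℕ} {G K U : Set (Euc d)} {α : ℝ}

theorem subset_hilbertExpand (hGK : G ⊆ interior K) (hα : 0 ≤ α) : G ⊆ hilbertExpand K G α := by
  refine fun g hg => ⟨hGK hg, ?_⟩
  have hbdd : BddBelow (hilbertDist K g '' G) :=
    ⟨0, forall_mem_image.2 fun _ hg' => hilbertDist_nonneg (hGK hg) (hGK hg')⟩
  exact (csInf_le hbdd ⟨g, hg, hilbertDist_self K g⟩).trans hα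

theorem exists_one_sub_inner_le_of_mem_hilbertExpand {x : Euc d} {β : ℝ} (hG : G.Nonempty)
    (hGK : G ⊆ interior K) (hαβ : α < β) (hx : x ∈ hilbertExpand K G α) :
    ∃ g ∈ G, ∀ w ∈ polarSet K, 1 - ⟪x, w⟫ ≤ Real.exp (2 * β) * (1 - ⟪g, w⟫) ∧
      1 - ⟪g, w⟫ ≤ Real.exp (2 * β) * (1 - ⟪x, w⟫) := by
  obtain ⟨_, ⟨g, hg, rfl⟩, hxg⟩ := exists_lt_of_csInf_lt (hG.image _) (hx.2.trans_lt hαβ)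
  have hgx : hilbertDist K g x ≤ β := (hilbertDist_comm K g x).trans_le hxg.le
  exact ⟨g, hg, fun w hw => ⟨one_sub_inner_le_of_hilbertDist_le hx.1 (hGK hg) hxg.le hw,
    one_sub_inner_le_of_hilbertDist_le (hGK hg) hx.1 hgx hw⟩⟩

theorem polarSet_inter_interior_subset_interior_polarSet_hilbertExpand
    (hK : Bornology.IsBounded K) (hG : G.Nonempty) (hGK : G ⊆ interior K) :
    polarSet K ∩ interior (polarSet G) ⊆ interior (polarSet (hilbertExpand K G α)) := by
  rintro y ⟨hyK, hyG⟩
  obtain ⟨δ, hδ, hyδ⟩ := exists_pos_le_one_sub_inner hyG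
  rw [mem_interior_polarSet_iff (hK.subset fun x hx => interior_subset hx.1)]
  refine ⟨δ / Real.exp (2 * (α + 1)), by positivity, fun x hx => ?_⟩
  obtain ⟨g, hg, hxg⟩ := exists_one_sub_inner_le_of_mem_hilbertExpand hG hGK (lt_add_one α) hx
  rw [div_le_iff₀' (Real.exp_pos _)]
  exact (hyδ g hg).trans (hxg y hyK).2

theorem one_sub_inner_le_of_mem_hilbertBall {c x y z : Euc d} (hG : G.Nonempty)
    (hGK : G ⊆ interior K) (hα : 0 < α) (hc : c ∈ interior (polarSet G))
    (hx : x ∈ hilbertExpand K G α) (hy : y ∈ polarSet K ∩ hilbertBall (polarSet G) c α)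
    (hz : z ∈ polarSet K ∩ hilbertBall (polarSet G) c α) :
    1 - ⟪x, z⟫ ≤ Real.exp (12 * α) * (1 - ⟪x, y⟫) := by
  obtain ⟨hyK, hyG, hdisty⟩ := hy
  obtain ⟨hzK, hzG, hdistz⟩ := hz
  obtain ⟨g, hg, hxg⟩ := exists_one_sub_inner_le_of_mem_hilbertExpand hG hGK
    (show α < 2 * α by linarith) hx
  have hgG : g ∈ polarSet (polarSet G) := subset_polarSet_polarSet G hg
  have hzc : 1 - ⟪g, z⟫ ≤ Real.exp (2 * α) * (1 - ⟪g, c⟫) := by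
    rw [real_inner_comm z, real_inner_comm c]
    exact one_sub_inner_le_of_hilbertDist_le hzG hc ((hilbertDist_comm _ _ _).trans_le hdistz) hgG
  have hcy : 1 - ⟪g, c⟫ ≤ Real.exp (2 * α) * (1 - ⟪g, y⟫) := by
    rw [real_inner_comm c, real_inner_comm y]
    exact one_sub_inner_le_of_hilbertDist_le hc hyG hdisty hgG
  calc
    1 - ⟪x, z⟫ ≤ Real.exp (2 * (2 * α)) * (1 - ⟪g, z⟫) := (hxg z hzK).1
    _ ≤ Real.exp (2 * (2 * α)) * (Real.exp (2 * α) * (1 - ⟪g, c⟫)) := by gcongr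
    _ ≤ Real.exp (2 * (2 * α)) * (Real.exp (2 * α) * (Real.exp (2 * α) * (1 - ⟪g, y⟫))) := by
      gcongr
    _ ≤ Real.exp (2 * (2 * α)) * (Real.exp (2 * α) * (Real.exp (2 * α) *
        (Real.exp (2 * (2 * α)) * (1 - ⟪x, y⟫)))) := by
      gcongr
      exact (hxg y hyK).2
    _ = Real.exp (12 * α) * (1 - ⟪x, y⟫) := by
      simp only [← mul_assoc, ← Real.exp_add]
      ring_nf

theorem exists_isHilbertCover_inter_hilbertBall {c : Euc d} (hK : Bornology.IsBounded K)
    (hG : (interior G).Nonempty) (hGK : G ⊆ interior K) (hα : 0 < α) (hU : U ⊆ polarSet K)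
    (hc : c ∈ interior (polarSet G)) :
    ∃ P : Finset (Euc d), IsHilbertCover (polarSet (hilbertExpand K G α))
        (U ∩ hilbertBall (polarSet G) c α) α P ∧
      (P.card : ℝ) ≤ (1 + 24 * Real.exp (24 * α)) ^ d := by
  have hGne : G.Nonempty := hG.mono interior_subset
  have hsub : U ∩ hilbertBall (polarSet G) c α ⊆ polarSet K ∩ hilbertBall (polarSet G) c α :=
    inter_subset_inter_left _ hU
  obtain ⟨P, hP, hcard⟩ := exists_isHilbertCover_polarSet
    (hG.mono (interior_mono (subset_hilbertExpand hGK hα.le))) hα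
    (Real.one_lt_exp_iff.2 (show 0 < 12 * α by positivity))
    (fun y hy => polarSet_inter_interior_subset_interior_polarSet_hilbertExpand hK hGne hGK
      ⟨hU hy.1, hy.2.1⟩)
    fun y hy z hz x hx =>
      one_sub_inner_le_of_mem_hilbertBall hGne hGK hα hc hx (hsub hy) (hsub hz)
  have hε : 0 < 1 - Real.exp (-α) := sub_pos.2 (Real.exp_lt_one_iff.2 (neg_lt_zero.2 hα))
  have hratio : 2 * (Real.exp (12 * α) - 1) / ((1 - Real.exp (-α)) / Real.exp (12 * α)) ≤
      24 * Real.exp (24 * α) := by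
    have hexp : Real.exp (24 * α) = Real.exp (12 * α) * Real.exp (12 * α) := by
      rw [← Real.exp_add]
      ring_nf
    have h := mul_le_mul_of_nonneg_right (exp_nat_mul_sub_one_le 12 α) (Real.exp_pos (12 * α)).le
    rw [div_div_eq_mul_div, div_le_iff₀ hε, hexp]
    push_cast at h
    linarith
  have hnonneg : 0 ≤ 2 * (Real.exp (12 * α) - 1) / ((1 - Real.exp (-α)) / Real.exp (12 * α)) := by
    have h1 : 0 ≤ Real.exp (12 * α) - 1 := sub_nonneg.2 (Real.one_le_exp (by positivity))
    positivity
  exact ⟨P, hP, hcard.trans (by gcongr)⟩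

end Expansion

theorem hilbert_polar_expansion_cover_general {d : ℕ} {G K U : Set (Euc d)} {α : ℝ}
    (hK : Bornology.IsBounded K) (hG : (interior G).Nonempty) (hGK : G ⊆ interior K)
    (hα : 0 < α) (hU : U ⊆ polarSet K) :
    (hilbertCov (polarSet (hilbertExpand K G α)) U α : ℝ) ≤
      (1 + 24 * Real.exp (24 * α)) ^ d * hilbertCov (polarSet G) U α :=
  hilbertCov_le_mul_hilbertCov (polarSet_anti (subset_hilbertExpand hGK hα.le)) fun _ hc =>
    exists_isHilbertCover_inter_hilbertBall hK hG hGK hα hU hc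

/-- Covering stability under polarity and Hilbert expansion. -/
theorem hilbert_polar_expansion_cover :
    ∃ c : ℝ, 1 ≤ c ∧ ∀ d : ℕ, 2 ≤ d →
      ∀ G K : Set (Euc d), IsConvexBody G → IsConvexBody K →
        (0 : Euc d) ∈ interior G → G ⊆ interior K →
        ∀ α : ℝ, 0 < α → α ≤ 1 → ∀ U : Set (Euc d), U ⊆ polarSet K →
          (hilbertCov (polarSet (hilbertExpand K G α)) U α : ℝ) ≤
            c ^ d * (hilbertCov (polarSet G) U α : ℝ) := by
  refine ⟨1 + 24 * Real.exp 24, le_add_of_nonneg_right (by positivity), ?_⟩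
  intro d _ G K hG hK _ hGK α hα hα1 U hU
  refine (hilbert_polar_expansion_cover_general hK.1.isBounded hG.2.2 hGK hα hU).trans ?_
  gcongr
  linarith
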